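/- If a family F of m-element sets has property P, then |F| ≤ C(2m-1, m). -/

import Mathlib

/-!
Property `P` at `k = 2` makes the family intersecting, and at `k = m + 1` it excludes `m + 1`
disjointly representable members. The latter bounds the size of every minimal transversal by `m`,
because each point of a minimal transversal is the only one meeting some member. So each member
`A i` is disjoint from a set `T i` with at most `m` points that meets all other members, and
`(A 1, T 1), …, (A t, T t), (T 1, A 1), …, (T t, A t)` is a skew Bollobás system, whence
`2 * t ≤ (2 * m).choose m`.

For the skew Bollobás inequality for pairs `(A i, B i)`, let the ground set consist of nonzero
scalars, and assign to a scalar `y` the linear form in `a + 1` variables that sends the coefficients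
of a polynomial of degree at most `a` to its value at `y`. The set `B j` gives a product of `b` such
forms, which vanishes at the coefficients of `∏ z ∈ A i, (X - z)` exactly when `A i` meets `B j`.
Hence these products are linearly independent in a space of dimension `(a + b).choose b`.
-/

open Finset

section LinearAlgebra

theorem linearIndependent_of_dual_triangular {ι R M : Type*} [LinearOrder ι] [CommRing R]
    [NoZeroDivisors R] [AddCommGroup M] [Module R M] (v : ι → M) (f : ι → Module.Dual R M)
    (hdiag : ∀ i, f i (v i) ≠ 0) (hlt : ∀ i j, i < j → f i (v j) = 0) :
    LinearIndependent R v := by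
  rw [linearIndependent_iff]
  intro l hl
  by_contra hne
  have hsupp : l.support.Nonempty := Finsupp.support_nonempty_iff.mpr hne
  set i := l.support.min' hsupp
  have hi : i ∈ l.support := l.support.min'_mem hsupp
  have hsum : ∑ j ∈ l.support, l j * f i (v j) = l i * f i (v i) :=
    sum_eq_single_of_mem i hi fun j hj hji ↦ by
      rw [hlt i j ((l.support.min'_le j hj).lt_of_ne' hji), mul_zero]
  have hzero : l i * f i (v i) = 0 := by
    simpa [← hsum, Finsupp.linearCombination_apply, Finsupp.sum] using congrArg (f i) hl
  exact mul_ne_zero (Finsupp.mem_support_iff.mp hi) (hdiag i) hzero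

theorem finrank_homogeneousSubmodule (σ R : Type*) [Fintype σ] [CommRing R] [Nontrivial R]
    (n : ℕ) :
    Module.finrank R (MvPolynomial.homogeneousSubmodule σ R n) =
      (Fintype.card σ).multichoose n := by
  classical
  have hdegree : {d : σ →₀ ℕ | d.degree = n} = (univ.finsuppAntidiag n : Finset (σ →₀ ℕ)) := by
    ext d
    simp [Finsupp.degree_eq_sum]
  rw [MvPolynomial.homogeneousSubmodule_eq_finsupp_supported, hdegree,
    (AddMonoidAlgebra.supportedEquivFinsupp _).finrank_eq, Module.finrank_finsupp_self]
  simp [card_finsuppAntidiag_nat_eq_multichoose]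

end LinearAlgebra

section SkewBollobas

open Polynomial in
theorem eval_prod_X_sub_C_eq_zero_iff {R : Type*} [CommRing R] [IsDomain R] (A : Finset R)
    (y : R) : (∏ z ∈ A, (X - C z)).eval y = 0 ↔ y ∈ A := by
  simp [eval_prod, prod_eq_zero_iff, sub_eq_zero]

open MvPolynomial

variable {R : Type*} [CommRing R]

/-- The linear form `∑ c, y ^ c * X c` in the variables `X 0, …, X a`, dual to the point with
parameter `y` of the moment curve: at the coefficients of a polynomial of degree at most `a` it
takes the value of that polynomial at `y`. -/
noncomputable def momentForm (a : ℕ) (y : R) : MvPolynomial (Fin (a + 1)) R :=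
  ∑ c : Fin (a + 1), C (y ^ (c : ℕ)) * X c

theorem isHomogeneous_momentForm (a : ℕ) (y : R) : (momentForm a y).IsHomogeneous 1 :=
  IsHomogeneous.sum _ _ _ fun c _ ↦ isHomogeneous_C_mul_X _ c

theorem eval_coeff_momentForm {a : ℕ} {p : Polynomial R} (hp : p.natDegree ≤ a) (y : R) :
    eval (fun c : Fin (a + 1) ↦ p.coeff c) (momentForm a y) = p.eval y := by
  rw [Polynomial.eval_eq_sum_range' (Nat.lt_succ_of_le hp), sum_range]
  simp [momentForm, mul_comm]

/-- The product of the moment forms of the points of `B`. If `#B ≤ b`, copies of the moment form of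
`0` bring its degree up to `b`. -/
noncomputable def momentProd (a b : ℕ) (B : Finset R) : MvPolynomial (Fin (a + 1)) R :=
  momentForm a 0 ^ (b - #B) * ∏ y ∈ B, momentForm a y

theorem isHomogeneous_momentProd (a : ℕ) {b : ℕ} {B : Finset R} (hB : #B ≤ b) :
    (momentProd a b B).IsHomogeneous b := by
  have h := ((isHomogeneous_momentForm a (0 : R)).pow (b - #B)).mul
    (IsHomogeneous.prod B (momentForm a) (fun _ ↦ 1) fun y _ ↦ isHomogeneous_momentForm a y)
  rwa [one_mul, sum_const, smul_eq_mul, mul_one, Nat.sub_add_cancel hB] at h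

variable [IsDomain R]

theorem eval_momentProd_eq_zero_iff {a b : ℕ} {A B : Finset R} (hA : #A ≤ a) (h0 : 0 ∉ A) :
    eval (fun c : Fin (a + 1) ↦ (∏ z ∈ A, (Polynomial.X - Polynomial.C z)).coeff c)
      (momentProd a b B) = 0 ↔ ¬ Disjoint A B := by
  have hdeg : (∏ z ∈ A, (Polynomial.X - Polynomial.C z)).natDegree ≤ a :=
    (Polynomial.natDegree_finsetProd_X_sub_C_eq_card A id).trans_le hA
  have hpad : (∏ z ∈ A, (Polynomial.X - Polynomial.C z)).eval 0 ^ (b - #B) ≠ 0 :=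
    pow_ne_zero _ (mt (eval_prod_X_sub_C_eq_zero_iff A 0).mp h0)
  simp only [momentProd, map_mul, map_pow, map_prod, eval_coeff_momentForm hdeg, mul_eq_zero, hpad,
    false_or, prod_eq_zero_iff, eval_prod_X_sub_C_eq_zero_iff, not_disjoint_iff, and_comm]

variable {ι : Type*} [Fintype ι] [LinearOrder ι] {a b : ℕ}

theorem card_le_choose_of_skew_of_zero_notMem (A B : ι → Finset R) (hA : ∀ i, #(A i) ≤ a)
    (hB : ∀ i, #(B i) ≤ b) (h0 : ∀ i, 0 ∉ A i) (hdisj : ∀ i, Disjoint (A i) (B i))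
    (hmeet : ∀ i j, i < j → ¬ Disjoint (A i) (B j)) :
    Fintype.card ι ≤ (a + b).choose b := by
  let V := homogeneousSubmodule (Fin (a + 1)) R b
  let v (j : ι) : V := ⟨momentProd a b (B j), isHomogeneous_momentProd a (hB j)⟩
  let f (i : ι) : Module.Dual R V := (aeval fun c : Fin (a + 1) ↦
    (∏ z ∈ A i, (Polynomial.X - Polynomial.C z)).coeff c).toLinearMap.domRestrict V
  have hf (i j : ι) : f i (v j) = 0 ↔ ¬ Disjoint (A i) (B j) :=
    eval_momentProd_eq_zero_iff (hA i) (h0 i)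
  have hv : LinearIndependent R v := linearIndependent_of_dual_triangular v f
    (fun i ↦ (hf i i).not_left.mpr (hdisj i)) fun i j hij ↦ (hf i j).mpr (hmeet i j hij)
  have : Module.Finite R V := Module.Finite.iff_fg.mpr (homogeneousSubmodule_fg _ _ b)
  calc Fintype.card ι ≤ Module.finrank R V := hv.fintype_card_le_finrank
    _ = (a + 1).multichoose b := by rw [finrank_homogeneousSubmodule, Fintype.card_fin]
    _ = (a + b).choose b := by rw [Nat.multichoose_eq, Nat.add_right_comm, Nat.add_sub_cancel]

theorem card_le_choose_of_skew {α : Type*} (A B : ι → Finset α) (hA : ∀ i, #(A i) ≤ a)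
    (hB : ∀ i, #(B i) ≤ b) (hdisj : ∀ i, Disjoint (A i) (B i))
    (hmeet : ∀ i j, i < j → ¬ Disjoint (A i) (B j)) :
    Fintype.card ι ≤ (a + b).choose b := by
  let φ : α ↪ MvPolynomial α ℤ := ⟨X, X_injective⟩
  refine card_le_choose_of_skew_of_zero_notMem (fun i ↦ (A i).map φ) (fun i ↦ (B i).map φ)
    (fun i ↦ ?_) (fun i ↦ ?_) (fun i ↦ ?_) (fun i ↦ ?_) fun i j hij ↦ ?_
  · rw [card_map]; exact hA i
  · rw [card_map]; exact hB i
  · simp [φ, X_ne_zero]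
  · exact (disjoint_map φ).mpr (hdisj i)
  · exact (disjoint_map φ).not.mpr (hmeet i j hij)

end SkewBollobas

theorem two_mul_card_le_choose_of_cross_intersecting {α ι : Type*} [Fintype ι] {m : ℕ}
    (A T : ι → Finset α) (hA : ∀ i, #(A i) ≤ m) (hT : ∀ i, #(T i) ≤ m)
    (hdisj : ∀ i, Disjoint (A i) (T i)) (hAA : ∀ i j, ¬ Disjoint (A i) (A j))
    (hAT : ∀ i j, i ≠ j → ¬ Disjoint (A i) (T j)) :
    2 * Fintype.card ι ≤ (2 * m).choose m := by
  let _ : LinearOrder ι := LinearOrder.lift' _ (Fintype.equivFin ι).injective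
  have key : Fintype.card (ι ⊕ₗ ι) ≤ (m + m).choose m :=
    card_le_choose_of_skew (fun i ↦ Sum.elim A T (ofLex i)) (fun i ↦ Sum.elim T A (ofLex i))
      (Sum.rec hA hT) (Sum.rec hT hA) (Sum.rec hdisj fun i ↦ (hdisj i).symm) ?_
  · rwa [Fintype.card_lex, Fintype.card_sum, ← two_mul, ← two_mul] at key
  rintro (i | i) (j | j) hij
  · exact hAT i j (Sum.Lex.inl_lt_inl_iff.mp hij).ne
  · exact hAA i j
  · exact absurd hij Sum.Lex.not_inr_lt_inl
  · exact fun h ↦ hAT j i (Sum.Lex.inr_lt_inr_iff.mp hij).ne' h.symm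

theorem choose_two_mul_le (m : ℕ) : (2 * m).choose m ≤ 2 * (2 * m - 1).choose m := by
  cases m with
  | zero => simp
  | succ n =>
    calc (2 * (n + 1)).choose (n + 1)
        = (2 * n + 1).choose n + (2 * n + 1).choose (n + 1) := Nat.choose_succ_succ' _ _
      _ = 2 * (2 * n + 1).choose (n + 1) := by rw [← Nat.choose_symm_half, ← two_mul]
      _ ≤ 2 * (2 * (n + 1) - 1).choose (n + 1) := le_rfl

section Transversal

variable {α : Type*}

/-- A tuple of sets is disjointly representable if each of its members contains a point that lies
in none of the other members. -/
def DisjointlyRepresentable {ι : Type*} (f : ι → Finset α) : Prop :=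
  ∃ x : ι → α, ∀ i j, x i ∈ f j ↔ i = j

theorem DisjointlyRepresentable.comp {ι κ : Type*} {f : ι → Finset α}
    (hf : DisjointlyRepresentable f) {e : κ → ι} (he : e.Injective) :
    DisjointlyRepresentable (f ∘ e) := by
  obtain ⟨x, hx⟩ := hf
  exact ⟨x ∘ e, fun i j ↦ (hx (e i) (e j)).trans he.eq_iff⟩

/-- A transversal, or hitting set, of a family meets all of its members. -/
def IsTransversal (F : Set (Finset α)) (T : Finset α) : Prop :=
  ∀ A ∈ F, ¬ Disjoint A T

variable {F : Set (Finset α)}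

theorem exists_forall_mem_iff_eq_of_minimal_isTransversal {T : Finset α}
    (hT : Minimal (IsTransversal F) T) {t : α} (ht : t ∈ T) :
    ∃ A ∈ F, ∀ s ∈ T, s ∈ A ↔ s = t := by
  classical
  have herase : ¬ IsTransversal F (T.erase t) := hT.not_prop_of_lt (erase_ssubset ht)
  simp only [IsTransversal, not_forall, not_not] at herase
  obtain ⟨A, hAF, hA⟩ := herase
  have heq : ∀ s ∈ T, s ∈ A → s = t := fun s hsT hsA ↦
    by_contra fun hst ↦ disjoint_left.mp hA hsA (mem_erase.mpr ⟨hst, hsT⟩)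
  obtain ⟨s, hsA, hsT⟩ := not_disjoint_iff.mp (hT.prop A hAF)
  have htA : t ∈ A := heq s hsT hsA ▸ hsA
  exact ⟨A, hAF, fun s hs ↦ ⟨heq s hs, fun hst ↦ hst ▸ htA⟩⟩

variable {m : ℕ}

theorem card_le_of_minimal_isTransversal
    (hrep : ∀ f : Fin (m + 1) → Finset α, (∀ i, f i ∈ F) → ¬ DisjointlyRepresentable f)
    {T : Finset α} (hT : Minimal (IsTransversal F) T) : #T ≤ m := by
  choose g hgF hg using fun t : T ↦ exists_forall_mem_iff_eq_of_minimal_isTransversal hT t.2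
  have hgrep : DisjointlyRepresentable g :=
    ⟨(↑), fun s t ↦ (hg t s s.2).trans Subtype.coe_inj⟩
  by_contra! hcard
  let e (i : Fin (m + 1)) : T := T.equivFin.symm (Fin.castLE hcard i)
  have he : e.Injective := T.equivFin.symm.injective.comp (Fin.castLE_injective hcard)
  exact hrep (g ∘ e) (fun i ↦ hgF (e i)) (hgrep.comp he)

theorem exists_disjoint_isTransversal_card_le (hfin : F.Finite) (hanti : IsAntichain (· ⊆ ·) F)
    (hrep : ∀ f : Fin (m + 1) → Finset α, (∀ i, f i ∈ F) → ¬ DisjointlyRepresentable f)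
    {A : Finset α} (hA : A ∈ F) :
    ∃ T, #T ≤ m ∧ Disjoint A T ∧ IsTransversal (F \ {A}) T := by
  classical
  have hsdiff : IsTransversal (F \ {A}) (hfin.toFinset.biUnion id \ A) := by
    rintro B ⟨hB, hBA⟩
    obtain ⟨x, hxB, hxA⟩ := not_subset.mp (hanti hB hA hBA)
    have hxF : x ∈ hfin.toFinset.biUnion id :=
      mem_biUnion.mpr ⟨B, hfin.mem_toFinset.mpr hB, hxB⟩
    exact not_disjoint_iff.mpr ⟨x, hxB, mem_sdiff.mpr ⟨hxF, hxA⟩⟩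
  obtain ⟨T, hTle, hT⟩ := exists_minimal_le_of_wellFoundedLT _ _ hsdiff
  exact ⟨T, card_le_of_minimal_isTransversal (fun f hf ↦ hrep f fun i ↦ (hf i).1) hT,
    disjoint_sdiff.mono_right hTle, hT.prop⟩

end Transversal

section Intersecting

variable {α : Type*} [DecidableEq α] {m : ℕ}

theorem ncard_le_choose_of_intersecting {F : Set (Finset α)} (hfin : F.Finite)
    (hcard : ∀ A ∈ F, #A ≤ m) (hanti : IsAntichain (· ⊆ ·) F) (hinter : F.Intersecting)
    (hrep : ∀ f : Fin (m + 1) → Finset α, (∀ i, f i ∈ F) → ¬ DisjointlyRepresentable f) :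
    F.ncard ≤ (2 * m - 1).choose m := by
  have := hfin.fintype
  choose T hTcard hTdisj hT using
    fun A : F ↦ exists_disjoint_isTransversal_card_le hfin hanti hrep A.2
  have key : 2 * Fintype.card F ≤ (2 * m).choose m :=
    two_mul_card_le_choose_of_cross_intersecting (↑) T (fun A ↦ hcard A A.2) hTcard hTdisj
      (fun A B ↦ hinter A.2 B.2) fun A B hAB ↦ hT B A ⟨A.2, Subtype.coe_ne_coe.mpr hAB⟩
  rw [← Nat.card_coe_set_eq, Nat.card_eq_fintype_card]
  exact Nat.le_of_mul_le_mul_left (key.trans (choose_two_mul_le m)) two_pos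

theorem encard_le_of_forall_finite_subset {β : Type*} {s : Set β} {n : ℕ}
    (h : ∀ t ⊆ s, t.Finite → t.ncard ≤ n) : s.encard ≤ n := by
  by_contra! hlt
  obtain ⟨t, hts, ht⟩ := Set.exists_subset_encard_eq (Order.add_one_le_of_lt hlt)
  have hfin : t.Finite := Set.finite_of_encard_eq_coe ht
  have hncard : t.ncard = n + 1 := by rw [Set.ncard, ht]; rfl
  exact absurd (h t hts hfin) (by lia)

theorem encard_le_choose_of_intersecting {F : Set (Finset α)}
    (hcard : ∀ A ∈ F, #A ≤ m) (hanti : IsAntichain (· ⊆ ·) F) (hinter : F.Intersecting)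
    (hrep : ∀ f : Fin (m + 1) → Finset α, (∀ i, f i ∈ F) → ¬ DisjointlyRepresentable f) :
    F.encard ≤ (2 * m - 1).choose m :=
  encard_le_of_forall_finite_subset fun _G hGF hG ↦
    ncard_le_choose_of_intersecting hG (fun A hA ↦ hcard A (hGF hA)) (hanti.subset hGF)
      (hinter.mono hGF) fun f hf ↦ hrep f fun i ↦ hGF (hf i)

end Intersecting

section PropertyP

variable {α : Type*} [DecidableEq α] {m k : ℕ} {F : Set (Finset α)}

/-- Property `P` of a family of `m`-sets, for a single value of `k`: among any `k` members, with
repetitions allowed, one has at most `m / k` points outside the union of the others. -/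
def HasPropertyP (m k : ℕ) (F : Set (Finset α)) : Prop :=
  ∀ f : Fin k → Finset α, (∀ i, f i ∈ F) → ∃ j, #(f j \ (univ.erase j).biUnion f) ≤ m / k

theorem HasPropertyP.intersecting (hP : HasPropertyP m 2 F) (hm : m ≠ 0) (hF : F.Sized m) :
    F.Intersecting := by
  intro A hA B hB hAB
  obtain ⟨j, hj⟩ := hP ![A, B] (Fin.forall_fin_two.mpr ⟨hA, hB⟩)
  have hself : ![A, B] j \ (univ.erase j).biUnion ![A, B] = ![A, B] j := by
    refine sdiff_eq_self_of_disjoint ((disjoint_biUnion_right _ _ _).mpr ?_)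
    fin_cases j <;> simp [Fin.forall_fin_two, hAB, hAB.symm]
  have hcard : ∀ i, #(![A, B] i) = m := Fin.forall_fin_two.mpr ⟨hF hA, hF hB⟩
  rw [hself, hcard] at hj
  exact hj.not_gt (Nat.div_lt_self hm.bot_lt one_lt_two)

theorem HasPropertyP.not_disjointlyRepresentable (hP : HasPropertyP m k F) (hk : m < k)
    {f : Fin k → Finset α} (hf : ∀ i, f i ∈ F) : ¬ DisjointlyRepresentable f := by
  rintro ⟨x, hx⟩
  obtain ⟨j, hj⟩ := hP f hf
  rw [Nat.div_eq_of_lt hk, Nat.le_zero, card_eq_zero, sdiff_eq_empty_iff_subset] at hj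
  obtain ⟨i, hi, hij⟩ := mem_biUnion.mp (hj ((hx j j).mpr rfl))
  exact ne_of_mem_erase hi ((hx j i).mp hij).symm

theorem stmt_9_general (hF : F.Sized m) (h2 : HasPropertyP m 2 F)
    (hsucc : HasPropertyP m (m + 1) F) : F.encard ≤ (2 * m - 1).choose m := by
  obtain rfl | hm := eq_or_ne m 0
  · simpa using Set.encard_le_one_iff_subsingleton.mpr hF.subsingleton
  · exact encard_le_choose_of_intersecting (fun A hA ↦ (hF hA).le) hF.isAntichain
      (h2.intersecting hm hF) fun f hf ↦ hsucc.not_disjointlyRepresentable m.lt_succ_self hf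

end PropertyP

theorem stmt_9 {α : Type*} [DecidableEq α] (m : ℕ)
    (F : Finset (Finset α)) (hcard : ∀ A ∈ F, A.card = m)
    (hP : ∀ k : ℕ, 1 ≤ k → ∀ f : Fin k → Finset α, (∀ i, f i ∈ F) →
      ∃ j : Fin k, ((f j) \ (Finset.univ.erase j).biUnion f).card ≤ m / k) :
    F.card ≤ Nat.choose (2 * m - 1) m := by
  have h := stmt_9_general (F := (F : Set (Finset α))) hcard (hP 2 one_le_two) (hP _ m.succ_pos)
  rwa [Set.encard_coe_eq_coe_finsetCard, Nat.cast_le] at h
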